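/- Let a > 0 and K > 0. There exist constants C > 0, b > 0, and ε₀ > 0, depending only on a and K, such that the following holds for all ε ∈ (0, ε₀). Let p₋ ≤ p₊ be real numbers and set d := p₊ − p₋. Let r, s : ℝ → ℝ satisfy |r(ξ)| ≤ Kε² e^{−aε|ξ|} and |s(ξ)| ≤ Kε³ e^{−aε|ξ|} for all ξ ∈ ℝ, and define the sequence y : ℤ → ℝ by y_j := r(j − p₊)·s(j − p₋). Then ‖y‖ + ‖y‖₊ + ‖y‖₋ ≤ C ε^{9/2} e^{−bεd}, where ‖y‖² := Σ_{j∈ℤ} y_j², ‖y‖₊² := Σ_{j∈ℤ} e^{2ε^{3/2}(j−p₊)} y_j², and ‖y‖₋² := Σ_{j∈ℤ} e^{−2ε^{3/2}(j−p₋)} y_j². -/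

import Mathlib

/-!
The squared product decays at rate `2aε` away from each of the two centres, whereas the weights
grow at rate `2ε^{3/2} ≤ aε` only. Half of the remaining rate `aε` gives `e^{-aεd/2}` through the
triangle inequality `d ≤ |j - p₊| + |j - p₋|`, and the other half leaves a two-sided geometric
series around `p₊`, whose sum is `O(1/ε)`. Thus each squared norm is
`O(ε^{10} · ε^{-1} e^{-aεd/2})`.
-/

open Real

section GeometricSum

variable {c : ℝ}

theorem hasSum_exp_neg_mul_abs_intCast_sub (hc : 0 < c) (p : ℝ) :
    HasSum (fun j : ℤ ↦ exp (-c * |(j : ℝ) - p|))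
      ((exp (-c * (1 - Int.fract p)) + exp (-c * Int.fract p)) * (1 - exp (-c))⁻¹) := by
  have geometric (t : ℝ) :
      HasSum (fun n : ℕ ↦ exp (-c * (n + t))) (exp (-c * t) * (1 - exp (-c))⁻¹) := by
    have hq : exp (-c) < 1 := exp_lt_one_iff.2 (neg_neg_of_pos hc)
    refine ((hasSum_geometric_of_lt_one (exp_pos _).le hq).mul_left (exp (-c * t))).congr_fun ?_
    intro n
    rw [← exp_nat_mul, ← exp_add]
    ring_nf
  have hp : (⌊p⌋ : ℝ) + Int.fract p = p := Int.floor_add_fract p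
  have abs_right (n : ℕ) :
      |(((n : ℤ) + (⌊p⌋ + 1) : ℤ) : ℝ) - p| = n + (1 - Int.fract p) := by
    rw [← abs_of_nonneg (add_nonneg n.cast_nonneg (sub_nonneg.2 (Int.fract_lt_one p).le))]
    push_cast
    congr 1
    linarith
  have abs_left (n : ℕ) :
      |((-((n : ℤ) + 1) + (⌊p⌋ + 1) : ℤ) : ℝ) - p| = n + Int.fract p := by
    rw [← abs_of_nonneg (add_nonneg n.cast_nonneg (Int.fract_nonneg p)), ← abs_neg]
    push_cast
    congr 1
    linarith
  rw [← (Equiv.addRight (⌊p⌋ + 1)).hasSum_iff, add_mul]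
  apply HasSum.of_nat_of_neg_add_one <;>
    simp only [Function.comp_apply, Equiv.coe_addRight, abs_right, abs_left, geometric]

theorem inv_one_sub_exp_neg_le (hc : 0 < c) : (1 - exp (-c))⁻¹ ≤ 1 + c⁻¹ := by
  have hexp : exp (-c) ≤ (1 + c)⁻¹ := by
    rw [exp_neg]
    exact inv_anti₀ (by positivity) (by linarith [add_one_le_exp c])
  calc (1 - exp (-c))⁻¹ ≤ (1 - (1 + c)⁻¹)⁻¹ := by
        refine inv_anti₀ (sub_pos.2 (inv_lt_one_of_one_lt₀ (by linarith))) (by linarith)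
    _ = 1 + c⁻¹ := by
        rw [show 1 - (1 + c)⁻¹ = c / (1 + c) by field_simp; ring]
        field_simp
        ring

theorem tsum_exp_neg_mul_abs_intCast_sub_le (hc : 0 < c) (p : ℝ) :
    ∑' j : ℤ, exp (-c * |(j : ℝ) - p|) ≤ 2 * (1 + c⁻¹) := by
  rw [(hasSum_exp_neg_mul_abs_intCast_sub hc p).tsum_eq]
  have h_right : exp (-c * (1 - Int.fract p)) ≤ 1 :=
    exp_le_one_iff.2 (by nlinarith [Int.fract_lt_one p])
  have h_left : exp (-c * Int.fract p) ≤ 1 :=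
    exp_le_one_iff.2 (by nlinarith [Int.fract_nonneg p])
  have h_nonneg : 0 ≤ (1 - exp (-c))⁻¹ :=
    inv_nonneg.2 (sub_nonneg.2 (exp_le_one_iff.2 (by linarith)))
  calc _ ≤ (1 + 1) * (1 - exp (-c))⁻¹ := by gcongr
    _ ≤ 2 * (1 + c⁻¹) := by
        rw [one_add_one_eq_two]
        gcongr
        exact inv_one_sub_exp_neg_le hc

end GeometricSum

section WeightedProduct

variable {A B α δ μ ν : ℝ}

theorem exp_mul_sq_le_of_abs_le_exp {u v x z : ℝ} (hδ : 0 ≤ δ)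
    (hμ : |μ| + 2 * δ ≤ 2 * α) (hν : |ν| + 2 * δ ≤ 2 * α)
    (hu : |u| ≤ A * exp (-α * |x|)) (hv : |v| ≤ B * exp (-α * |z|)) :
    exp (μ * x + ν * z) * (u * v) ^ 2 ≤
      (A * B) ^ 2 * exp (-δ * |x - z|) * exp (-δ * |x|) := by
  have hμx : μ * x ≤ (2 * α - 2 * δ) * |x| :=
    (le_abs_self _).trans ((abs_mul μ x).trans_le (by gcongr; linarith))
  have hνz : ν * z ≤ (2 * α - 2 * δ) * |z| :=
    (le_abs_self _).trans ((abs_mul ν z).trans_le (by gcongr; linarith))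
  have triangle : δ * |x - z| ≤ δ * (|x| + |z|) := by gcongr; exact abs_sub x z
  have hδz : 0 ≤ δ * |z| := by positivity
  calc exp (μ * x + ν * z) * (u * v) ^ 2
      ≤ exp (μ * x + ν * z) * (A * exp (-α * |x|) * (B * exp (-α * |z|))) ^ 2 := by
        rw [← sq_abs (u * v), abs_mul]
        have := (abs_nonneg u).trans hu
        gcongr
    _ = (A * B) ^ 2 * (exp (μ * x + ν * z) * exp (-α * |x|) ^ 2 * exp (-α * |z|) ^ 2) := by ring
    _ = (A * B) ^ 2 * exp (μ * x + ν * z - 2 * α * |x| - 2 * α * |z|) := by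
        rw [← exp_nat_mul, ← exp_nat_mul, ← exp_add, ← exp_add]
        ring_nf
    _ ≤ (A * B) ^ 2 * exp (-δ * |x - z| + -δ * |x|) := by
        gcongr
        linarith
    _ = _ := by rw [exp_add, mul_assoc]

variable {f g : ℝ → ℝ}

theorem summable_exp_mul_sq_of_abs_le_exp (hδ : 0 < δ)
    (hμ : |μ| + 2 * δ ≤ 2 * α) (hν : |ν| + 2 * δ ≤ 2 * α)
    (hf : ∀ ξ, |f ξ| ≤ A * exp (-α * |ξ|)) (hg : ∀ ξ, |g ξ| ≤ B * exp (-α * |ξ|)) (p q : ℝ) :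
    Summable fun j : ℤ ↦ exp (μ * (j - p) + ν * (j - q)) * (f (j - p) * g (j - q)) ^ 2 :=
  .of_nonneg_of_le (fun _ ↦ by positivity)
    (fun _ ↦ exp_mul_sq_le_of_abs_le_exp hδ.le hμ hν (hf _) (hg _))
    (by simpa only [sub_sub_sub_cancel_left] using
      (hasSum_exp_neg_mul_abs_intCast_sub hδ p).summable.mul_left _)

theorem tsum_exp_mul_sq_le_of_abs_le_exp (hδ : 0 < δ)
    (hμ : |μ| + 2 * δ ≤ 2 * α) (hν : |ν| + 2 * δ ≤ 2 * α)
    (hf : ∀ ξ, |f ξ| ≤ A * exp (-α * |ξ|)) (hg : ∀ ξ, |g ξ| ≤ B * exp (-α * |ξ|)) (p q : ℝ) :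
    ∑' j : ℤ, exp (μ * (j - p) + ν * (j - q)) * (f (j - p) * g (j - q)) ^ 2 ≤
      (A * B) ^ 2 * exp (-δ * |p - q|) * (2 * (1 + δ⁻¹)) := by
  have termwise (j : ℤ) : exp (μ * (j - p) + ν * (j - q)) * (f (j - p) * g (j - q)) ^ 2 ≤
      (A * B) ^ 2 * exp (-δ * |p - q|) * exp (-δ * |(j : ℝ) - p|) := by
    simpa only [sub_sub_sub_cancel_left, abs_sub_comm q p] using
      exp_mul_sq_le_of_abs_le_exp hδ.le hμ hν (hf (j - p)) (hg (j - q))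
  calc _ ≤ ∑' j : ℤ, (A * B) ^ 2 * exp (-δ * |p - q|) * exp (-δ * |(j : ℝ) - p|) :=
        (summable_exp_mul_sq_of_abs_le_exp hδ hμ hν hf hg p q).tsum_le_tsum termwise
          ((hasSum_exp_neg_mul_abs_intCast_sub hδ p).summable.mul_left _)
    _ ≤ _ := by
        rw [tsum_mul_left]
        gcongr
        exact tsum_exp_neg_mul_abs_intCast_sub_le hδ p

theorem sqrt_tsum_exp_mul_sq_le_of_abs_le_exp (hδ : 0 < δ)
    (hμ : |μ| + 2 * δ ≤ 2 * α) (hν : |ν| + 2 * δ ≤ 2 * α)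
    (hf : ∀ ξ, |f ξ| ≤ A * exp (-α * |ξ|)) (hg : ∀ ξ, |g ξ| ≤ B * exp (-α * |ξ|)) (p q : ℝ) :
    √(∑' j : ℤ, exp (μ * (j - p) + ν * (j - q)) * (f (j - p) * g (j - q)) ^ 2) ≤
      A * B * √(2 * (1 + δ⁻¹)) * exp (-(δ / 2) * |p - q|) := by
  have hA : 0 ≤ A := by simpa using (abs_nonneg _).trans (hf 0)
  have hB : 0 ≤ B := by simpa using (abs_nonneg _).trans (hg 0)
  refine sqrt_le_iff.2
    ⟨by positivity, (tsum_exp_mul_sq_le_of_abs_le_exp hδ hμ hν hf hg p q).trans_eq ?_⟩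
  rw [mul_pow _ (exp _), mul_pow _ √_, sq_sqrt (by positivity), ← exp_nat_mul]
  ring_nf

end WeightedProduct

section LongWaveScaling

variable {a ε : ℝ}

theorem two_mul_rpow_three_halves_le (ha : 0 ≤ a) (hε : 0 < ε) (hεa : ε ≤ a ^ 2 / 4) :
    2 * ε ^ ((3 : ℝ) / 2) ≤ a * ε := by
  have hsqrt : √ε ≤ a / 2 := (sqrt_le_left (by positivity)).2 (by linarith)
  calc 2 * ε ^ ((3 : ℝ) / 2) = 2 * √ε * ε := by
        rw [show (3 : ℝ) / 2 = 1 / 2 + 1 by norm_num, rpow_add_one hε.ne', sqrt_eq_rpow]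
        ring
    _ ≤ a * ε := by gcongr; linarith

theorem pow_five_mul_sqrt_one_add_inv_le (ha : 0 < a) (hε : 0 < ε) (hε1 : ε ≤ 1) :
    ε ^ 5 * √(2 * (1 + (a * ε)⁻¹)) ≤ √(2 * (1 + a⁻¹)) * ε ^ ((9 : ℝ) / 2) := by
  have hpow : ε ^ 5 = ε ^ ((9 : ℝ) / 2) * √ε := by
    rw [sqrt_eq_rpow, ← rpow_add hε, ← rpow_natCast]
    norm_num
  calc ε ^ 5 * √(2 * (1 + (a * ε)⁻¹)) = √(ε * (2 * (1 + (a * ε)⁻¹))) * ε ^ ((9 : ℝ) / 2) := by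
        rw [hpow, sqrt_mul hε.le]
        ring
    _ ≤ √(2 * (1 + a⁻¹)) * ε ^ ((9 : ℝ) / 2) := by
        gcongr ?_ * _
        apply sqrt_le_sqrt
        calc ε * (2 * (1 + (a * ε)⁻¹)) = 2 * (ε + a⁻¹) := by field_simp
          _ ≤ 2 * (1 + a⁻¹) := by gcongr

theorem sqrt_tsum_exp_mul_sq_le_rpow_nine_halves {K μ ν : ℝ} {r s : ℝ → ℝ}
    (ha : 0 < a) (hε : 0 < ε) (hε1 : ε ≤ 1) (hμ : |μ| ≤ a * ε) (hν : |ν| ≤ a * ε)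
    (hr : ∀ ξ, |r ξ| ≤ K * ε ^ 2 * exp (-(a * ε) * |ξ|))
    (hs : ∀ ξ, |s ξ| ≤ K * ε ^ 3 * exp (-(a * ε) * |ξ|)) (p q : ℝ) :
    √(∑' j : ℤ, exp (μ * (j - p) + ν * (j - q)) * (r (j - p) * s (j - q)) ^ 2) ≤
      K ^ 2 * √(2 * (1 + (a / 2)⁻¹)) * ε ^ ((9 : ℝ) / 2) * exp (-(a / 4 * ε) * |p - q|) := by
  calc _ ≤ K * ε ^ 2 * (K * ε ^ 3) * √(2 * (1 + (a / 2 * ε)⁻¹)) *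
        exp (-(a / 2 * ε / 2) * |p - q|) :=
        sqrt_tsum_exp_mul_sq_le_of_abs_le_exp (by positivity) (by linarith) (by linarith) hr hs p q
    _ = K ^ 2 * (ε ^ 5 * √(2 * (1 + (a / 2 * ε)⁻¹))) * exp (-(a / 4 * ε) * |p - q|) := by
        ring_nf
    _ ≤ K ^ 2 * (√(2 * (1 + (a / 2)⁻¹)) * ε ^ ((9 : ℝ) / 2)) * exp (-(a / 4 * ε) * |p - q|) := by
        gcongr K ^ 2 * ?_ * _
        exact pow_five_mul_sqrt_one_add_inv_le (by positivity) hε hε1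
    _ = _ := by ring

end LongWaveScaling

theorem cross_term_weighted_l2_estimate_general
    (a K : ℝ) (ha : 0 < a) (hK : 0 < K) :
    ∃ C > (0 : ℝ), ∃ b > (0 : ℝ), ∃ ε₀ > (0 : ℝ), ∀ ε ∈ Set.Ioo (0 : ℝ) ε₀,
      ∀ pm pp : ℝ, ∀ r s : ℝ → ℝ,
      (∀ ξ : ℝ, |r ξ| ≤ K * ε ^ 2 * exp (-(a * ε) * |ξ|)) →
      (∀ ξ : ℝ, |s ξ| ≤ K * ε ^ 3 * exp (-(a * ε) * |ξ|)) →
      √(∑' j : ℤ, (r (j - pp) * s (j - pm)) ^ 2)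
        + √(∑' j : ℤ, exp (2 * ε ^ ((3 : ℝ) / 2) * (j - pp)) * (r (j - pp) * s (j - pm)) ^ 2)
        + √(∑' j : ℤ, exp (-(2 * ε ^ ((3 : ℝ) / 2)) * (j - pm)) * (r (j - pp) * s (j - pm)) ^ 2)
      ≤ C * ε ^ ((9 : ℝ) / 2) * exp (-(b * ε) * |pp - pm|) := by
  refine ⟨3 * (K ^ 2 * √(2 * (1 + (a / 2)⁻¹))), by positivity, a / 4, by positivity,
    min 1 (a ^ 2 / 4), by positivity, ?_⟩
  rintro ε ⟨hε, hε₀⟩ pm pp r s hr hs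
  obtain ⟨hε1, hεa⟩ := lt_min_iff.1 hε₀
  have h_zero : |(0 : ℝ)| ≤ a * ε := by rw [abs_zero]; positivity
  have h_weight : |2 * ε ^ ((3 : ℝ) / 2)| ≤ a * ε :=
    (abs_of_pos (by positivity)).trans_le (two_mul_rpow_three_halves_le ha.le hε hεa.le)
  have bound {μ ν : ℝ} (hμ : |μ| ≤ a * ε) (hν : |ν| ≤ a * ε) :=
    sqrt_tsum_exp_mul_sq_le_rpow_nine_halves ha hε hε1.le hμ hν hr hs pp pm
  have unweighted := bound h_zero h_zero
  have weighted_plus := bound h_weight h_zero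
  have weighted_minus := bound h_zero ((abs_neg _).trans_le h_weight)
  simp only [zero_mul, add_zero, zero_add, exp_zero, one_mul]
    at unweighted weighted_plus weighted_minus
  linarith

/-- Cross-term estimate for two counterpropagating exponentially localized profiles:
if `|r(ξ)| ≤ Kε² e^{-aε|ξ|}` and `|s(ξ)| ≤ Kε³ e^{-aε|ξ|}`, then the product sequence
`y_j = r(j - p₊) s(j - p₋)` satisfies `‖y‖ + ‖y‖₊ + ‖y‖₋ ≤ C ε^{9/2} e^{-bεd}` where
`d = p₊ - p₋` and `‖·‖₊`, `‖·‖₋` are the `e^{±2ε^{3/2}(j - p±)}`-weighted `ℓ²(ℤ)` norms. -/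
theorem cross_term_weighted_l2_estimate
    (a K : ℝ) (ha : 0 < a) (hK : 0 < K) :
    ∃ C > (0 : ℝ), ∃ b > (0 : ℝ), ∃ ε₀ > (0 : ℝ), ∀ ε ∈ Set.Ioo (0 : ℝ) ε₀,
      ∀ pm pp : ℝ, pm ≤ pp → ∀ r s : ℝ → ℝ,
      (∀ ξ : ℝ, |r ξ| ≤ K * ε ^ 2 * Real.exp (-(a * ε) * |ξ|)) →
      (∀ ξ : ℝ, |s ξ| ≤ K * ε ^ 3 * Real.exp (-(a * ε) * |ξ|)) →
      Real.sqrt (∑' j : ℤ, (r ((j : ℝ) - pp) * s ((j : ℝ) - pm)) ^ 2)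
        + Real.sqrt (∑' j : ℤ, Real.exp (2 * ε ^ ((3 : ℝ) / 2) * ((j : ℝ) - pp)) *
            (r ((j : ℝ) - pp) * s ((j : ℝ) - pm)) ^ 2)
        + Real.sqrt (∑' j : ℤ, Real.exp (-(2 * ε ^ ((3 : ℝ) / 2)) * ((j : ℝ) - pm)) *
            (r ((j : ℝ) - pp) * s ((j : ℝ) - pm)) ^ 2)
      ≤ C * ε ^ ((9 : ℝ) / 2) * Real.exp (-(b * ε) * (pp - pm)) := by
  obtain ⟨C, hC, b, hb, ε₀, hε₀, estimate⟩ := cross_term_weighted_l2_estimate_general a K ha hK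
  exact ⟨C, hC, b, hb, ε₀, hε₀, fun ε hε pm pp hp r s hr hs ↦ by
    simpa only [abs_of_nonneg (sub_nonneg.2 hp)] using estimate ε hε pm pp r s hr hs⟩
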